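/- Let J ∈ Γ_0(ℝ^n), x ∈ ℝ^n, t > 0, ε > 0. Let u_MAP = argmin_{u} {J(u) + (1/(2t))‖x−u‖²} and let u_PM = (∫ u e^{−(J(u)+(1/(2t))‖x−u‖²)/ε} du)/(∫ e^{−(J(u)+(1/(2t))‖x−u‖²)/ε} du), assuming the integrals are finite. Then ‖u_PM − u_MAP‖² ≤ n t ε. -/

import Mathlib

open MeasureTheory

lemma lin_limit (A B : ℝ) (h : ∀ r : ℝ, 0 < r → r < 1 → A ≤ r * B) : A ≤ 0 := by
  by_contra hA
  push Not at hA
  have hB : 0 < |B| + A + 1 := by positivity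
  have h1 := h (A / (|B| + A + 1)) (by positivity)
    (by rw [div_lt_one hB]; linarith [abs_nonneg B])
  rw [div_mul_eq_mul_div, le_div_iff₀ hB] at h1
  nlinarith [le_abs_self B]

lemma scalar_bound (n : ℕ) (c : ℝ) (hc : 0 ≤ c)
    (h : ∀ s : ℝ, 0 < s → s < 1 → s ^ n * (1 + c * (1 - s ^ 2)) ≤ 1) : 2 * c ≤ n := by
  have key : ∀ r : ℝ, 0 < r → r < 1 → (2 * c - n) ≤ r * (2 * c * n) := by
    intro r hr hr1
    have hs0 : 0 < Real.sqrt (1 - r) := Real.sqrt_pos.2 (by linarith)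
    have hsq : Real.sqrt (1 - r) ^ 2 = 1 - r := Real.sq_sqrt (by linarith)
    have hs1 : Real.sqrt (1 - r) < 1 := by nlinarith
    have h1 := h _ hs0 hs1
    rw [hsq] at h1
    have hpos : 0 ≤ Real.sqrt (1 - r) ^ n * (1 + c * (1 - (1 - r))) := by
      have : 0 ≤ c * (1 - (1 - r)) := mul_nonneg hc (by linarith)
      positivity
    have h2 : (Real.sqrt (1 - r) ^ n * (1 + c * (1 - (1 - r)))) ^ 2 ≤ 1 := by
      nlinarith
    have h3 : (Real.sqrt (1 - r) ^ n) ^ 2 = (1 - r) ^ n := by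
      rw [← pow_mul, mul_comm, pow_mul, hsq]
    rw [mul_pow, h3] at h2
    have hb : 1 - n * r ≤ (1 - r) ^ n := by
      have := one_add_mul_le_pow (a := -r) (by linarith) n
      have e : 1 + -r = 1 - r := by ring
      rw [e] at this
      linarith
    have hp : 0 ≤ (1 - r) ^ n := pow_nonneg (by linarith) n
    have hcr : 0 ≤ c * r := by positivity
    have h4 : (1 - r) ^ n * (1 + 2 * (c * r)) ≤ 1 := by
      refine le_trans (mul_le_mul_of_nonneg_left ?_ hp) h2
      nlinarith
    have h5 : (1 - n * r) * (1 + 2 * (c * r)) ≤ 1 :=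
      le_trans (mul_le_mul_of_nonneg_right hb (by linarith)) h4
    have h6 : r * (2 * c - n) ≤ r * (r * (2 * c * n)) := by nlinarith
    exact le_of_mul_le_mul_left h6 hr
  linarith [lin_limit _ _ key]

/-- Distance bound between the posterior mean and the MAP estimator:
`‖u_PM - u_MAP‖² ≤ n t ε` for `J ∈ Γ₀(ℝⁿ)` with `int(dom J) ≠ ∅` and `inf J = 0`
(with the convention `e^{-∞} = 0` in the density). -/
theorem stmt16 (n : ℕ) (t ε : ℝ) (ht : 0 < t) (hε : 0 < ε)
    (J : EuclideanSpace ℝ (Fin n) → EReal)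
    (hproper : ∃ u, J u ≠ ⊤) (hnobot : ∀ u, J u ≠ ⊥)
    (hconv : ∀ u v : EuclideanSpace ℝ (Fin n), ∀ a b : ℝ, 0 ≤ a → 0 ≤ b → a + b = 1 →
      J (a • u + b • v) ≤ (a : EReal) * J u + (b : EReal) * J v)
    (hlsc : LowerSemicontinuous J)
    (hint : (interior {u : EuclideanSpace ℝ (Fin n) | J u ≠ ⊤}).Nonempty)
    (hinf : (⨅ u, J u) = 0)
    (x uMAP : EuclideanSpace ℝ (Fin n))
    (hMAP : ∀ v, J uMAP + (((1 / (2 * t)) * ‖x - uMAP‖ ^ 2 : ℝ) : EReal)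
      ≤ J v + (((1 / (2 * t)) * ‖x - v‖ ^ 2 : ℝ) : EReal))
    (φ : EuclideanSpace ℝ (Fin n) → ℝ)
    (hφ : ∀ u, φ u = if J u = ⊤ then 0
      else Real.exp (-((J u).toReal + (1 / (2 * t)) * ‖x - u‖ ^ 2) / ε))
    (hφint : Integrable φ)
    (hφvint : Integrable (fun u => φ u • u))
    (hφpos : 0 < ∫ u, φ u) :
    ‖((∫ u, φ u)⁻¹ • ∫ u, φ u • u) - uMAP‖ ^ 2 ≤ n * t * ε := by
  set m := uMAP with hm
  set q : ℝ := 1 / (2 * t) with hq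
  have hq0 : 0 < q := by positivity
  have hmtop : J m ≠ ⊤ := by
    obtain ⟨v, hv⟩ := hproper
    intro h
    have := hMAP v
    rw [h, EReal.top_add_coe, top_le_iff] at this
    lift J v to ℝ using ⟨hv, hnobot v⟩ with b
    exact EReal.coe_ne_top _ (by exact_mod_cast this)
  obtain ⟨A, hA⟩ : ∃ A : ℝ, J m = A := ⟨_, (EReal.coe_toReal hmtop (hnobot m)).symm⟩
  have hφ0 : ∀ u, 0 ≤ φ u := by
    intro u
    rw [hφ]
    split_ifs
    · exact le_rfl
    · positivity
  have hnorm : ∀ (s : ℝ) (w : EuclideanSpace ℝ (Fin n)), ‖x - (m + s • w)‖ ^ 2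
      = ‖x - m‖ ^ 2 - 2 * s * inner ℝ (x - m) w + s ^ 2 * ‖w‖ ^ 2 := by
    intro s w
    rw [← sub_sub, norm_sub_sq_real, inner_smul_right, norm_smul, mul_pow, Real.norm_eq_abs,
      sq_abs]
    ring
  have hpt : ∀ s : ℝ, 0 < s → s < 1 → ∀ w,
      φ (m + w) * (1 + (1 - s ^ 2) * (q / ε) * ‖w‖ ^ 2) ≤ φ (m + s • w) := by
    intro s hs hs1 w
    by_cases hw : J (m + w) = ⊤
    · rw [hφ (m + w), if_pos hw, zero_mul]
      exact hφ0 _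
    obtain ⟨B, hB⟩ : ∃ B : ℝ, J (m + w) = B := ⟨_, (EReal.coe_toReal hw (hnobot _)).symm⟩
    have hJ : ∀ r : ℝ, 0 < r → r < 1 →
        ∃ C : ℝ, J (m + r • w) = C ∧ C ≤ (1 - r) * A + r * B := by
      intro r hr hr1
      have h1 := hconv m (m + w) (1 - r) r (by linarith) hr.le (by ring)
      have e : (1 - r) • m + r • (m + w) = m + r • w := by
        module
      rw [e, hA, hB] at h1
      have h2 : J (m + r • w) ≤ (((1 - r) * A + r * B : ℝ) : EReal) := by
        exact_mod_cast h1
      have hne : J (m + r • w) ≠ ⊤ := ne_top_of_le_ne_top (EReal.coe_ne_top _) h2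
      refine ⟨_, (EReal.coe_toReal hne (hnobot _)).symm, ?_⟩
      rw [← EReal.coe_toReal hne (hnobot _)] at h2
      exact_mod_cast h2
    have hprox : A - B + 2 * q * inner ℝ (x - m) w ≤ 0 := by
      apply lin_limit _ (q * ‖w‖ ^ 2)
      intro r hr hr1
      obtain ⟨C, hC, hC2⟩ := hJ r hr hr1
      have h1 := hMAP (m + r • w)
      rw [hA, hC] at h1
      have h2 : A + q * ‖x - m‖ ^ 2 ≤ C + q * ‖x - (m + r • w)‖ ^ 2 := by exact_mod_cast h1
      rw [hnorm] at h2
      refine le_of_mul_le_mul_left ?_ hr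
      linarith
    obtain ⟨C, hC, hC2⟩ := hJ s hs hs1
    rw [hφ (m + w), hφ (m + s • w), if_neg hw, if_neg (by rw [hC]; exact EReal.coe_ne_top _),
      hB, hC, EReal.toReal_coe, EReal.toReal_coe, hnorm]
    have hn1 := hnorm 1 w
    rw [one_smul] at hn1
    rw [hn1]
    have hx := Real.add_one_le_exp ((1 - s ^ 2) * (q / ε) * ‖w‖ ^ 2)
    refine le_trans (mul_le_mul_of_nonneg_left (by linarith) (Real.exp_pos _).le)
      (le_trans (Real.exp_add _ _).ge (Real.exp_le_exp.2 ?_))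
    have e : (1 - s ^ 2) * (q / ε) * ‖w‖ ^ 2 = ((1 - s ^ 2) * q * ‖w‖ ^ 2) / ε := by ring
    rw [e, ← add_div]
    apply div_le_div_of_nonneg_right _ hε.le
    have := mul_le_mul_of_nonneg_left hprox (sub_nonneg.2 hs1.le)
    linarith
  set Z := ∫ u, φ u with hZ
  set a := (Z⁻¹ • ∫ u, φ u • u) - m with ha
  have hgint : Integrable (fun w => φ (m + w)) := hφint.comp_add_left m
  have hgv0 : Integrable (fun w => φ (m + w) • (m + w)) := hφvint.comp_add_left m
  have hgm : Integrable (fun w => φ (m + w) • m) := hgint.smul_const m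
  have hgv : Integrable (fun w => φ (m + w) • w) := by
    refine (hgv0.sub hgm).congr (Filter.Eventually.of_forall fun w => ?_)
    simp [smul_add]
  have hgZ : ∫ w, φ (m + w) = Z := integral_add_left_eq_self φ m
  have hmean : ∫ w, φ (m + w) • w = Z • a := by
    have h1 : ∫ w, φ (m + w) • (m + w) = ∫ u, φ u • u :=
      integral_add_left_eq_self (fun u => φ u • u) m
    have h2 : ∫ w, φ (m + w) • w = (∫ w, φ (m + w) • (m + w)) - ∫ w, φ (m + w) • m := by
      rw [← integral_sub hgv0 hgm]
      congr 1
      ext1 w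
      simp [smul_add]
    rw [h2, h1, integral_smul_const, hgZ, ha, smul_sub, smul_smul, mul_inv_cancel₀ hφpos.ne',
      one_smul]
  have hinn : Integrable (fun w => inner ℝ a (φ (m + w) • w)) := hgv.const_inner a
  have hinnZ : ∫ w, inner ℝ a (φ (m + w) • w) = Z * ‖a‖ ^ 2 := by
    rw [integral_inner hgv, hmean, inner_smul_right, real_inner_self_eq_norm_sq]
  have main : 2 * (q / ε * ‖a‖ ^ 2) ≤ n := by
    apply scalar_bound n _ (by positivity)
    intro s hs hs1
    set k := (1 - s ^ 2) * (q / ε) with hk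
    have hk0 : 0 ≤ k := mul_nonneg (by nlinarith) (by positivity)
    have hsint : Integrable (fun w => φ (m + s • w)) := hgint.comp_smul hs.ne'
    have hsZ : ∫ w, φ (m + s • w) = (s ^ n)⁻¹ * Z := by
      have := Measure.integral_comp_smul volume (fun w => φ (m + w)) s
      rw [finrank_euclideanSpace_fin, hgZ, abs_of_pos (by positivity)] at this
      simpa using this
    have hle : ∫ w, ((1 - k * ‖a‖ ^ 2) * φ (m + w) + 2 * k * inner ℝ a (φ (m + w) • w))
        ≤ ∫ w, φ (m + s • w) := by
      apply integral_mono ((hgint.const_mul _).add (hinn.const_mul _)) hsint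
      intro w
      refine le_trans ?_ (hpt s hs hs1 w)
      rw [← hk]
      simp only [inner_smul_right, Pi.add_apply]
      have h1 : 0 ≤ ‖a - w‖ ^ 2 := by positivity
      rw [norm_sub_sq_real] at h1
      have := mul_nonneg (mul_nonneg hk0 (hφ0 (m + w))) h1
      linarith
    rw [integral_add (hgint.const_mul _) (hinn.const_mul _), integral_const_mul,
      integral_const_mul, hinnZ, hgZ, hsZ] at hle
    have hsn : 0 < s ^ n := by positivity
    have h3 : (1 + k * ‖a‖ ^ 2) * Z ≤ (s ^ n)⁻¹ * Z := by linarith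
    have h4 := le_of_mul_le_mul_right h3 hφpos
    have h5 := mul_le_mul_of_nonneg_left h4 hsn.le
    rw [mul_inv_cancel₀ hsn.ne'] at h5
    have e : 1 + q / ε * ‖a‖ ^ 2 * (1 - s ^ 2) = 1 + k * ‖a‖ ^ 2 := by rw [hk]; ring
    rw [e]
    exact h5
  have e : 2 * (q / ε * ‖a‖ ^ 2) = ‖a‖ ^ 2 / (t * ε) := by
    rw [hq]; field_simp
  rw [e, div_le_iff₀ (by positivity)] at main
  linarith
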